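/- Let L be a real symmetric n×n matrix with L_{ij} ≤ 0 for all i ≠ j and all row sums zero, and suppose the graph on the index set with an edge between i and j whenever L_{ij} < 0 is connected. Then for every nonempty proper subset S of the index set, the grounded Laplacian L_ff (the principal submatrix of L on the complement of S) is positive definite. -/

import Mathlib

open Matrix

/-!
For a symmetric matrix `L` with row sums `r i`,
`2 xᵀLx = ∑ i, ∑ j, -L i j * (x i - x j) ^ 2 + 2 * ∑ i, r i * x i ^ 2`.
When the off-diagonal entries are nonpositive and the row sums are nonnegative, every term is
nonnegative, so `xᵀLx = 0` forces `x` to be constant along edges and to vanish wherever `r i > 0`.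
The quadratic form of `L_ff` is that of `L` restricted to vectors vanishing on `S`, so it is
positive definite as soon as every vertex is joined to `S` or to a vertex with positive row sum.
-/

theorem posDef_submatrix_of_dotProduct_mulVec_pos {m n R : Type*} [Fintype n] [Ring R]
    [PartialOrder R] [StarRing R] {M : Matrix n n R} (hM : M.IsHermitian)
    {e : m → n} (he : Function.Injective e)
    (hpos : ∀ y : n → R, y ≠ 0 → (∀ i ∉ Set.range e, y i = 0) → 0 < star y ⬝ᵥ M *ᵥ y) :
    (M.submatrix e e).PosDef := by
  refine ⟨hM.submatrix e, fun x hx ↦ ?_⟩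
  -- `x.mapDomain e` is the extension of `x` by zero.
  have hne : ⇑(x.mapDomain e) ≠ 0 := by
    simpa using (Finsupp.mapDomain_injective he).ne_iff' Finsupp.mapDomain_zero |>.2 hx
  have hform_pos := hpos (x.mapDomain e) hne fun i ↦ Finsupp.mapDomain_of_notMem_range x i
  have hform : star ⇑(x.mapDomain e) ⬝ᵥ M *ᵥ ⇑(x.mapDomain e) = (x.mapDomain e).sum fun i xi ↦
      (x.mapDomain e).sum fun j xj ↦ star xi * M i j * xj := by
    simp [Finsupp.sum_fintype, dotProduct, mulVec, Finset.mul_sum, mul_assoc]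
  rw [hform] at hform_pos
  simpa [Finsupp.sum_mapDomain_index, add_mul, mul_add] using hform_pos

theorem eq_of_reachable_of_forall_adj {V α : Type*} {G : SimpleGraph V} {f : V → α}
    (hf : ∀ i j, G.Adj i j → f i = f j) {i j : V} (hij : G.Reachable i j) : f i = f j := by
  rw [SimpleGraph.reachable_eq_reflTransGen] at hij
  exact Relation.reflTransGen_le_of_equivalence_of_le (Setoid.ker f).iseqv hf i j hij

section QuadraticForm

variable {V R : Type*} [CommRing R] {L : Matrix V V R}

theorem neg_mul_sub_sq_nonneg [LinearOrder R] [IsStrictOrderedRing R]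
    (hoff : ∀ i j, i ≠ j → L i j ≤ 0) (x : V → R) (i j : V) :
    0 ≤ -L i j * (x i - x j) ^ 2 := by
  obtain rfl | hij := eq_or_ne i j
  · simp
  · exact mul_nonneg (neg_nonneg.2 (hoff i j hij)) (sq_nonneg _)

variable [Fintype V]

theorem two_mul_dotProduct_mulVec_self (hsym : L.IsSymm) (x : V → R) :
    2 * (x ⬝ᵥ L *ᵥ x) =
      ∑ i, ∑ j, -L i j * (x i - x j) ^ 2 + 2 * ∑ i, (∑ j, L i j) * x i ^ 2 := by
  have hswap : ∑ i, ∑ j, L i j * x j ^ 2 = ∑ i, ∑ j, L i j * x i ^ 2 := by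
    rw [Finset.sum_comm]
    simp only [hsym.apply]
  calc 2 * (x ⬝ᵥ L *ᵥ x)
      = ∑ i, ∑ j, -L i j * (x i - x j) ^ 2
          + (∑ i, ∑ j, L i j * x i ^ 2 + ∑ i, ∑ j, L i j * x j ^ 2) := by
        simp only [dotProduct, mulVec, Finset.mul_sum, ← Finset.sum_add_distrib]
        congr! 2
        ring
    _ = ∑ i, ∑ j, -L i j * (x i - x j) ^ 2 + 2 * ∑ i, (∑ j, L i j) * x i ^ 2 := by
        simp only [hswap, ← two_mul, Finset.sum_mul]

variable [LinearOrder R] [IsStrictOrderedRing R]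

theorem dotProduct_mulVec_self_nonneg (hsym : L.IsSymm) (hoff : ∀ i j, i ≠ j → L i j ≤ 0)
    (hrow : ∀ i, 0 ≤ ∑ j, L i j) (x : V → R) : 0 ≤ x ⬝ᵥ L *ᵥ x := by
  have hedge : 0 ≤ ∑ i, ∑ j, -L i j * (x i - x j) ^ 2 :=
    Finset.sum_nonneg fun i _ ↦ Finset.sum_nonneg fun j _ ↦ neg_mul_sub_sq_nonneg hoff x i j
  have hvertex : 0 ≤ ∑ i, (∑ j, L i j) * x i ^ 2 :=
    Finset.sum_nonneg fun i _ ↦ mul_nonneg (hrow i) (sq_nonneg _)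
  linarith [two_mul_dotProduct_mulVec_self hsym x]

theorem dotProduct_mulVec_self_eq_zero_iff (hsym : L.IsSymm) (hoff : ∀ i j, i ≠ j → L i j ≤ 0)
    (hrow : ∀ i, 0 ≤ ∑ j, L i j) (x : V → R) :
    x ⬝ᵥ L *ᵥ x = 0 ↔
      (∀ i j, L i j ≠ 0 → x i = x j) ∧ ∀ i, ∑ j, L i j ≠ 0 → x i = 0 := by
  have hedge := neg_mul_sub_sq_nonneg hoff x
  have hedges (i : V) : 0 ≤ ∑ j, -L i j * (x i - x j) ^ 2 := Finset.sum_nonneg fun j _ ↦ hedge i j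
  have hvertex (i : V) : 0 ≤ (∑ j, L i j) * x i ^ 2 := mul_nonneg (hrow i) (sq_nonneg _)
  have hedge_zero : ∑ i, ∑ j, -L i j * (x i - x j) ^ 2 = 0 ↔ ∀ i j, L i j ≠ 0 → x i = x j := by
    simp only [Fintype.sum_eq_zero_iff_of_nonneg hedges, funext_iff, Pi.zero_apply,
      Fintype.sum_eq_zero_iff_of_nonneg (hedge _), mul_eq_zero, neg_eq_zero,
      sq_eq_zero_iff, sub_eq_zero, or_iff_not_imp_left, ne_eq]
  have hvertex_zero : ∑ i, (∑ j, L i j) * x i ^ 2 = 0 ↔ ∀ i, ∑ j, L i j ≠ 0 → x i = 0 := by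
    simp only [Fintype.sum_eq_zero_iff_of_nonneg hvertex, funext_iff, Pi.zero_apply, mul_eq_zero,
      sq_eq_zero_iff, or_iff_not_imp_left, ne_eq]
  rw [← mul_eq_zero_iff_left two_ne_zero, two_mul_dotProduct_mulVec_self hsym,
    add_eq_zero_iff_of_nonneg (Finset.sum_nonneg fun i _ ↦ hedges i)
      (mul_nonneg zero_le_two (Finset.sum_nonneg fun i _ ↦ hvertex i)),
    mul_eq_zero_iff_left two_ne_zero, hedge_zero, hvertex_zero]

end QuadraticForm

theorem grounded_posDef_general {V R : Type*} [Fintype V] [CommRing R] [LinearOrder R]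
    [IsStrictOrderedRing R] [StarRing R] [TrivialStar R] {L : Matrix V V R} (hsym : L.IsSymm)
    (hoff : ∀ i j, i ≠ j → L i j ≤ 0) (hrow : ∀ i, 0 ≤ ∑ j, L i j)
    {G : SimpleGraph V} (hG : ∀ i j, G.Adj i j → L i j ≠ 0)
    {S : Set V} (hS : ∀ i, ∃ k, G.Reachable i k ∧ (k ∈ S ∨ ∑ j, L k j ≠ 0)) :
    (L.submatrix (Subtype.val : {i // i ∉ S} → V) Subtype.val).PosDef := by
  refine posDef_submatrix_of_dotProduct_mulVec_pos (isHermitian_iff_isSymm.2 hsym)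
    Subtype.val_injective fun y hy hyS ↦ ?_
  rw [star_trivial]
  refine (dotProduct_mulVec_self_nonneg hsym hoff hrow y).lt_of_ne' fun hzero ↦ hy ?_
  obtain ⟨hedge, hvertex⟩ := (dotProduct_mulVec_self_eq_zero_iff hsym hoff hrow y).1 hzero
  ext i
  obtain ⟨k, hik, hk⟩ := hS i
  have hyk : y k = 0 := hk.elim (fun hkS ↦ hyS k (by simpa using hkS)) (hvertex k)
  exact (eq_of_reachable_of_forall_adj (fun i j hij ↦ hedge i j (hG i j hij)) hik).trans hyk

/-- let `L` be a real symmetric matrix with nonpositive off-diagonal entries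
and zero row sums, such that the graph with an edge `{i,j}` whenever `L i j < 0` is
connected (a weighted Laplacian of a connected graph). Then for every nonempty proper
leader set `S`, the grounded Laplacian `L_ff` (the principal submatrix on the complement
of `S`) is positive definite. -/
theorem grounded_posDef {n : ℕ} (L : Matrix (Fin n) (Fin n) ℝ)
    (hsym : L.IsSymm)
    (hoff : ∀ i j, i ≠ j → L i j ≤ 0)
    (hrow : ∀ i, ∑ j, L i j = 0)
    (G : SimpleGraph (Fin n)) (hG : ∀ i j, G.Adj i j ↔ i ≠ j ∧ L i j < 0)
    (hconn : G.Connected)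
    (S : Finset (Fin n)) (hne : S.Nonempty) (hproper : S ≠ Finset.univ) :
    (L.submatrix (Subtype.val : {i : Fin n // i ∉ S} → Fin n)
      (Subtype.val : {i : Fin n // i ∉ S} → Fin n)).PosDef := by
  obtain ⟨s, hs⟩ := hne
  exact grounded_posDef_general hsym hoff (fun i ↦ (hrow i).ge)
    (fun i j hij ↦ ((hG i j).1 hij).2.ne) (S := S) fun i ↦ ⟨s, hconn.preconnected i s, .inl hs⟩
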